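/- Let a and b be positive divisors of d with a dividing b, and let u, v be integers satisfying gcd(u, v, d/a) = 1, u·a·b ≡ a·b (mod d), and gcd(u, d/a, d/b) = 1. Then there exists a unitary matrix W on ℂ^d with W X^a W† ≈ X^{ua} Z^{va} and W Z^b W† ≈ Z^b. -/

import Mathlib

open Matrix

/-- The primitive `d`-th root of unity `ω = e^{2πi/d}`. -/
noncomputable def omega (d : ℕ) : ℂ := Complex.exp (2 * Real.pi * Complex.I / d)

/-- The power `X^s` (for any integer `s`) of the shift matrix `X` on `ℂ^d`,
`X|j⟩ = |j+1 mod d⟩`; its `(i,j)` entry is `1` iff `i ≡ j + s (mod d)`. -/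
def Xpow (d : ℕ) (s : ℤ) : Matrix (Fin d) (Fin d) ℂ :=
  Matrix.of fun i j => if (i : ℤ) = (((j : ℕ) : ℤ) + s) % (d : ℤ) then (1 : ℂ) else 0

/-- The power `Z^t` (for any integer `t`) of the clock matrix `Z` on `ℂ^d`,
`Z|j⟩ = ω^j |j⟩`; it is diagonal with entries `ω^{t·j} = e^{2πi·t·j/d}`. -/
noncomputable def Zpow (d : ℕ) (t : ℤ) : Matrix (Fin d) (Fin d) ℂ :=
  Matrix.diagonal fun j => Complex.exp (2 * Real.pi * Complex.I * (t : ℂ) * ((j : ℕ) : ℂ) / (d : ℂ))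

/-- The generalized Pauli matrix `X^s Z^t` on `ℂ^d`. -/
noncomputable def GPM (d : ℕ) (s t : ℤ) : Matrix (Fin d) (Fin d) ℂ :=
  Xpow d s * Zpow d t

/-- `A ≈ B` : equality up to a unimodular (global phase) scalar. -/
def PhaseEq {n : Type*} (A B : Matrix n n ℂ) : Prop :=
  ∃ c : ℂ, ‖c‖ = 1 ∧ A = c • B

/-!
Some phase multiple `Q` of `X^{ua} Z^{va}` satisfies `Q^{d/a} = 1`, and `Z^b Q = ω^{ab} Q Z^b`
since `uab ≡ ab`. So if `w_0, …, w_{a-1}` are eigenvectors of `Z^b` with `Z^b w_s = ω^{bs} w_s`,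
then the matrix `W : |s + at⟩ ↦ Q^t w_s` intertwines `X^a` with `Q` and commutes with `Z^b`, and
it is unitary as soon as the vectors `Q^t w_s` are orthonormal.

Put `h = gcd(u, d/a)`. Since `h` is coprime to `d/b`, there are `a` progressions of length `h`,
the `s`-th contained in the class of `s` modulo `d/b`, that together represent every residue class
modulo `ah` once; `w_s` is the uniform superposition over the `s`-th one. As `ah` divides `ua`,
the powers of `Q` preserve labels modulo `ah`, so `⟨w_s, Q^t w_{s'}⟩` vanishes unless `s = s'` and
`d ∣ uat`. In that case it is, up to phase, the mean of a geometric progression of `h`-th roots of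
unity, with ratio `1` only if `d/a ∣ t` because `v` is coprime to `h`.
-/

namespace PhaseEq

variable {n : Type*} {A B C D : Matrix n n ℂ}

lemma refl (A : Matrix n n ℂ) : PhaseEq A A := ⟨1, norm_one, (one_smul ℂ A).symm⟩

lemma smul {c : ℂ} (hc : ‖c‖ = 1) (A : Matrix n n ℂ) : PhaseEq (c • A) A := ⟨c, hc, rfl⟩

lemma trans (hAB : PhaseEq A B) (hBC : PhaseEq B C) : PhaseEq A C := by
  obtain ⟨c, hc, rfl⟩ := hAB
  obtain ⟨c', hc', rfl⟩ := hBC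
  exact ⟨c * c', by rw [norm_mul, hc, hc', mul_one], smul_smul c c' C⟩

variable [Fintype n]

lemma mul (hAB : PhaseEq A B) (hCD : PhaseEq C D) : PhaseEq (A * C) (B * D) := by
  obtain ⟨c, hc, rfl⟩ := hAB
  obtain ⟨c', hc', rfl⟩ := hCD
  exact ⟨c * c', by rw [norm_mul, hc, hc', mul_one], smul_mul_smul_comm c B c' D⟩

variable [DecidableEq n]

lemma pow (hAB : PhaseEq A B) (k : ℕ) : PhaseEq (A ^ k) (B ^ k) := by
  induction k with
  | zero => simpa only [pow_zero] using refl 1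
  | succ k ih => simpa only [pow_succ] using ih.mul hAB

lemma mem_unitaryGroup (hAB : PhaseEq A B) (hB : B ∈ unitaryGroup n ℂ) :
    A ∈ unitaryGroup n ℂ := by
  obtain ⟨c, hc, rfl⟩ := hAB
  rw [mem_unitaryGroup_iff] at hB ⊢
  rw [star_smul, smul_mul_smul_comm, hB, RCLike.star_def, RCLike.mul_conj, hc]
  simp only [RCLike.ofReal_one, one_pow, one_smul]

lemma exists_pow_eq_one {k : ℕ} (hk : 0 < k) (hA : PhaseEq (A ^ k) 1) :
    ∃ Q, PhaseEq Q A ∧ Q ^ k = 1 := by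
  obtain ⟨c, hc, hAc⟩ := hA
  obtain ⟨q, hq⟩ := IsAlgClosed.exists_pow_nat_eq c⁻¹ hk
  have hq_norm : ‖q‖ = 1 := by
    rw [← pow_eq_one_iff_of_nonneg (norm_nonneg q) hk.ne', ← norm_pow, hq, norm_inv, hc, inv_one]
  have hc0 : c ≠ 0 := norm_ne_zero_iff.1 (hc.symm ▸ one_ne_zero)
  exact ⟨q • A, smul hq_norm A, by rw [smul_pow, hAc, hq, inv_smul_smul₀ hc0]⟩

end PhaseEq

section Unitary

variable {n : Type*} [Fintype n]

lemma star_mulVec_dotProduct_mulVec (A B : Matrix n n ℂ) (x y : n → ℂ) :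
    star (A *ᵥ x) ⬝ᵥ (B *ᵥ y) = star x ⬝ᵥ ((star A * B) *ᵥ y) := by
  rw [star_mulVec, ← dotProduct_mulVec, mulVec_mulVec, star_eq_conjTranspose]

variable [DecidableEq n]

lemma mul_mul_conjTranspose_of_mul_eq {W A B : Matrix n n ℂ} (hW : W ∈ unitaryGroup n ℂ)
    (h : W * A = B * W) : W * A * Wᴴ = B := by
  rw [h, mul_assoc, ← star_eq_conjTranspose, mem_unitaryGroup_iff.1 hW, mul_one]

lemma star_pow_mul_pow_of_pow_eq_one {Q : Matrix n n ℂ} (hQ : Q ∈ unitaryGroup n ℂ) {m k l : ℕ}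
    (hQm : Q ^ m = 1) (hk : k ≤ m) : star (Q ^ k) * Q ^ l = Q ^ (m - k + l) := by
  have hQk : star (Q ^ k) * Q ^ k = 1 := mem_unitaryGroup_iff'.1 (pow_mem hQ k)
  calc star (Q ^ k) * Q ^ l = star (Q ^ k) * (Q ^ k * Q ^ (m - k)) * Q ^ l := by
        rw [← pow_add, Nat.add_sub_cancel' hk, hQm, mul_one]
    _ = Q ^ (m - k + l) := by rw [← mul_assoc (star _), hQk, one_mul, ← pow_add]

lemma mulVec_pow_mulVec_of_mul_eq_smul {Z Q : Matrix n n ℂ} {c μ : ℂ} {w : n → ℂ}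
    (hZQ : Z * Q = c • (Q * Z)) (hw : Z *ᵥ w = μ • w) (k : ℕ) :
    Z *ᵥ (Q ^ k *ᵥ w) = (c ^ k * μ) • (Q ^ k *ᵥ w) := by
  induction k with
  | zero => simpa only [pow_zero, one_mulVec, one_mul] using hw
  | succ k ih =>
    calc Z *ᵥ (Q ^ (k + 1) *ᵥ w) = (Z * Q) *ᵥ (Q ^ k *ᵥ w) := by
          rw [pow_succ', ← mulVec_mulVec, mulVec_mulVec]
      _ = c • (Q *ᵥ (Z *ᵥ (Q ^ k *ᵥ w))) := by rw [hZQ, smul_mulVec, ← mulVec_mulVec _ Q Z]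
      _ = (c ^ (k + 1) * μ) • (Q ^ (k + 1) *ᵥ w) := by
          rw [ih, mulVec_smul, smul_smul, mulVec_mulVec, ← pow_succ', pow_succ' c, mul_assoc]

end Unitary

section Ket

variable {d : ℕ}

lemma natCast_val_inj {i j : Fin d} : ((i : ℕ) : ZMod d) = ((j : ℕ) : ZMod d) ↔ i = j := by
  rw [ZMod.natCast_eq_natCast_iff', Nat.mod_eq_of_lt i.2, Nat.mod_eq_of_lt j.2, Fin.val_inj]

variable [NeZero d]

/-- The computational basis vector `|x mod d⟩`, labelled by `ZMod d` so that the action of the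
shift matrix is addition of labels. -/
def ket (d : ℕ) [NeZero d] (x : ZMod d) : Fin d → ℂ := Pi.single ⟨x.val, x.val_lt⟩ 1

lemma ket_val (i : Fin d) : ket d (i : ℕ) = Pi.single i 1 := by
  simp only [ket, ZMod.val_natCast_of_lt i.2]

lemma exists_fin_val_eq (x : ZMod d) : ∃ i : Fin d, ((i : ℕ) : ZMod d) = x :=
  ⟨⟨x.val, x.val_lt⟩, ZMod.natCast_rightInverse x⟩

lemma ket_apply (x : ZMod d) (i : Fin d) : ket d x i = if ((i : ℕ) : ZMod d) = x then 1 else 0 := by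
  obtain ⟨j, rfl⟩ := exists_fin_val_eq x
  simp only [ket_val, Pi.single_apply, natCast_val_inj]

lemma star_ket_dotProduct_ket (x y : ZMod d) :
    star (ket d x) ⬝ᵥ ket d y = if x = y then 1 else 0 := by
  obtain ⟨i, rfl⟩ := exists_fin_val_eq x
  rw [ket_val, ← Pi.single_star, star_one, single_one_dotProduct, ket_apply]

lemma ext_of_mulVec_ket {A B : Matrix (Fin d) (Fin d) ℂ}
    (h : ∀ x : ZMod d, A *ᵥ ket d x = B *ᵥ ket d x) : A = B :=
  ext_of_mulVec_single fun i => by simpa only [ket_val] using h (i : ℕ)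

lemma mem_unitaryGroup_of_mulVec_ket {A : Matrix (Fin d) (Fin d) ℂ}
    (h : ∀ i j : Fin d,
      star (A *ᵥ ket d (i : ℕ)) ⬝ᵥ (A *ᵥ ket d (j : ℕ)) = if i = j then 1 else 0) :
    A ∈ unitaryGroup (Fin d) ℂ := by
  rw [mem_unitaryGroup_iff']
  ext i j
  rw [one_apply, ← h i j, star_mulVec_dotProduct_mulVec, ket_val, ket_val, ← Pi.single_star,
    star_one, single_one_dotProduct, mulVec_single_one, col_apply]

end Ket

section GeneralizedPauli

variable {d : ℕ} [NeZero d]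

lemma Xpow_mulVec_ket (s : ℤ) (x : ZMod d) : Xpow d s *ᵥ ket d x = ket d (x + s) := by
  obtain ⟨j, rfl⟩ := exists_fin_val_eq x
  ext i
  have hi : ((i : ℕ) : ℤ) % d = (i : ℕ) := Int.emod_eq_of_lt (by positivity) (by exact_mod_cast i.2)
  rw [ket_val, mulVec_single_one, col_apply, ket_apply, Xpow, of_apply]
  refine if_congr ?_ rfl rfl
  rw [← hi, ← Int.ModEq, ← ZMod.intCast_eq_intCast_iff]
  push_cast
  rfl

lemma Zpow_mulVec_ket (t : ℤ) (x : ZMod d) :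
    Zpow d t *ᵥ ket d x = ZMod.stdAddChar (N := d) (t * x) • ket d x := by
  ext i
  rw [Zpow, mulVec_diagonal, Pi.smul_apply, smul_eq_mul, ket_apply]
  split_ifs with hi
  · have hti : (t : ZMod d) * (i : ℕ) = ((t * (i : ℕ) : ℤ) : ZMod d) := by push_cast; rfl
    rw [← hi, hti, ZMod.stdAddChar_coe]
    push_cast
    ring_nf
  · simp only [mul_zero]

lemma GPM_mulVec_ket (s t : ℤ) (x : ZMod d) :
    GPM d s t *ᵥ ket d x = ZMod.stdAddChar (N := d) (t * x) • ket d (x + s) := by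
  rw [GPM, ← mulVec_mulVec, Zpow_mulVec_ket, mulVec_smul, Xpow_mulVec_ket]

lemma GPM_mul_GPM (s t s' t' : ℤ) :
    GPM d s t * GPM d s' t' =
      ZMod.stdAddChar (N := d) (t * s') • GPM d (s + s') (t + t') := by
  refine ext_of_mulVec_ket fun x => ?_
  rw [← mulVec_mulVec, smul_mulVec]
  simp only [GPM_mulVec_ket, mulVec_smul, smul_smul, ← AddChar.map_add_eq_mul]
  push_cast
  ring_nf

lemma Zpow_mul_GPM (b s t : ℤ) :
    Zpow d b * GPM d s t =
      ZMod.stdAddChar (N := d) (b * s) • (GPM d s t * Zpow d b) := by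
  refine ext_of_mulVec_ket fun x => ?_
  rw [← mulVec_mulVec, smul_mulVec, ← mulVec_mulVec]
  simp only [GPM_mulVec_ket, Zpow_mulVec_ket, mulVec_smul, smul_smul, ← AddChar.map_add_eq_mul]
  ring_nf

lemma GPM_eq_one {s t : ℤ} (hs : (d : ℤ) ∣ s) (ht : (d : ℤ) ∣ t) : GPM d s t = 1 := by
  rw [← ZMod.intCast_zmod_eq_zero_iff_dvd] at hs ht
  refine ext_of_mulVec_ket fun x => ?_
  rw [GPM_mulVec_ket, hs, ht, zero_mul, AddChar.map_zero_eq_one, one_smul, add_zero, one_mulVec]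

lemma GPM_pow_phaseEq (s t : ℤ) (k : ℕ) : PhaseEq (GPM d s t ^ k) (GPM d (k * s) (k * t)) := by
  induction k with
  | zero => simpa [GPM_eq_one] using PhaseEq.refl 1
  | succ k ih =>
    have h : PhaseEq (GPM d (k * s) (k * t) * GPM d s t) (GPM d (k * s + s) (k * t + t)) := by
      rw [GPM_mul_GPM]
      exact .smul (AddChar.norm_apply _ _) _
    simpa only [pow_succ, Nat.cast_succ, add_one_mul] using (ih.mul (.refl (GPM d s t))).trans h

lemma GPM_mem_unitaryGroup (s t : ℤ) : GPM d s t ∈ unitaryGroup (Fin d) ℂ := by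
  refine mem_unitaryGroup_of_mulVec_ket fun i j => ?_
  simp only [GPM_mulVec_ket, star_smul, smul_dotProduct, dotProduct_smul, smul_eq_mul,
    star_ket_dotProduct_ket, add_left_inj, natCast_val_inj]
  split_ifs with hij
  · rw [hij, mul_one, RCLike.star_def, RCLike.mul_conj, AddChar.norm_apply, RCLike.ofReal_one,
      one_pow]
  · simp only [mul_zero]

end GeneralizedPauli

section Orbit

variable {d : ℕ}

/-- The matrix whose column `s + a * t`, with `s < a`, is `Q ^ t *ᵥ w s`. When `d = a * D` and
`Q ^ D = 1` it intertwines `X ^ a` with `Q`. -/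
def orbitMatrix (a : ℕ) (Q : Matrix (Fin d) (Fin d) ℂ) (w : ℕ → Fin d → ℂ) :
    Matrix (Fin d) (Fin d) ℂ :=
  of fun i c => (Q ^ ((c : ℕ) / a) *ᵥ w ((c : ℕ) % a)) i

variable [NeZero d] {a D : ℕ} {Q : Matrix (Fin d) (Fin d) ℂ} {w : ℕ → Fin d → ℂ}

lemma orbitMatrix_mulVec_ket (hd : d = a * D) (hQD : Q ^ D = 1) (c : ℕ) :
    orbitMatrix a Q w *ᵥ ket d c = Q ^ (c / a) *ᵥ w (c % a) := by
  obtain ⟨i, hi⟩ : ∃ i : Fin d, (i : ℕ) = c % d := ⟨⟨c % d, Nat.mod_lt _ (NeZero.pos d)⟩, rfl⟩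
  have hc : orbitMatrix a Q w *ᵥ ket d c =
      Q ^ ((c % d) / a) *ᵥ w ((c % d) % a) := by
    rw [← ZMod.natCast_mod c d, ← hi, ket_val, mulVec_single_one]
    rfl
  rw [hc, Nat.mod_mod_of_dvd c ⟨D, hd⟩, pow_eq_pow_mod (c / a) hQD, ← Nat.mod_mul_right_div_self,
    ← hd]

lemma orbitMatrix_mem_unitaryGroup (hd : d = a * D) (hQD : Q ^ D = 1)
    (hQ : Q ∈ unitaryGroup (Fin d) ℂ)
    (hw : ∀ n s s', s < a → s' < a →
      star (w s) ⬝ᵥ (Q ^ n *ᵥ w s') = if s = s' ∧ D ∣ n then 1 else 0) :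
    orbitMatrix a Q w ∈ unitaryGroup (Fin d) ℂ := by
  have ha : 0 < a := Nat.pos_of_ne_zero (left_ne_zero_of_mul (hd ▸ NeZero.ne d))
  refine mem_unitaryGroup_of_mulVec_ket fun i j => ?_
  have hi : (i : ℕ) / a < D := Nat.div_lt_of_lt_mul (hd ▸ i.2)
  have hj : (j : ℕ) / a < D := Nat.div_lt_of_lt_mul (hd ▸ j.2)
  rw [orbitMatrix_mulVec_ket hd hQD, orbitMatrix_mulVec_ket hd hQD, star_mulVec_dotProduct_mulVec,
    star_pow_mul_pow_of_pow_eq_one hQ hQD hi.le, hw _ _ _ (Nat.mod_lt _ ha) (Nat.mod_lt _ ha)]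
  have hdvd : D ∣ D - i / a + j / a ↔ (i : ℕ) / a = j / a := by
    rw [← Nat.sub_add_comm hi.le, ← Nat.modEq_iff_dvd' (hi.le.trans (Nat.le_add_right ..)),
      Nat.ModEq, Nat.add_mod_left, Nat.mod_eq_of_lt hi, Nat.mod_eq_of_lt hj]
  refine if_congr ?_ rfl rfl
  rw [hdvd, ← Fin.val_inj, Nat.ext_div_mod_iff a i j, and_comm]

lemma orbitMatrix_mul_Xpow (hd : d = a * D) (hQD : Q ^ D = 1) :
    orbitMatrix a Q w * Xpow d a = Q * orbitMatrix a Q w := by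
  have ha : 0 < a := Nat.pos_of_ne_zero (left_ne_zero_of_mul (hd ▸ NeZero.ne d))
  refine ext_of_mulVec_ket fun x => ?_
  obtain ⟨c, rfl⟩ := ZMod.natCast_zmod_surjective x
  rw [← mulVec_mulVec, ← mulVec_mulVec, Xpow_mulVec_ket, Int.cast_natCast, ← Nat.cast_add,
    orbitMatrix_mulVec_ket hd hQD, orbitMatrix_mulVec_ket hd hQD, Nat.add_div_right c ha,
    Nat.add_mod_right, mulVec_mulVec, pow_succ']

lemma orbitMatrix_mul_Zpow {b : ℤ} (hd : d = a * D) (hQD : Q ^ D = 1)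
    (hZQ : Zpow d b * Q = ZMod.stdAddChar (N := d) (b * a) • (Q * Zpow d b))
    (hw : ∀ s : ℕ, Zpow d b *ᵥ w s = ZMod.stdAddChar (N := d) (b * s) • w s) :
    orbitMatrix a Q w * Zpow d b = Zpow d b * orbitMatrix a Q w := by
  refine ext_of_mulVec_ket fun x => ?_
  obtain ⟨c, rfl⟩ := ZMod.natCast_zmod_surjective x
  have hc : (b : ZMod d) * (c : ZMod d) =
      (c / a) • ((b : ZMod d) * (a : ZMod d)) + (b : ZMod d) * ((c % a : ℕ) : ZMod d) := by
    conv_lhs => rw [← Nat.mod_add_div c a, Nat.cast_add, Nat.cast_mul]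
    rw [nsmul_eq_mul]
    ring
  rw [← mulVec_mulVec, ← mulVec_mulVec, Zpow_mulVec_ket, mulVec_smul,
    orbitMatrix_mulVec_ket hd hQD, mulVec_pow_mulVec_of_mul_eq_smul hZQ (hw _), hc,
    AddChar.map_add_eq_mul, AddChar.map_nsmul_eq_pow]

end Orbit

section ProgressionState

variable {d : ℕ} [NeZero d]

/-- The normalized sum of the basis vectors labelled by the progression `x + k e`, `k < h`. It has
norm one when these labels are distinct, and it is an eigenvector of `Z ^ b` when `b e ≡ 0`. -/
noncomputable def progressionState (d : ℕ) [NeZero d] (h : ℕ) (x e : ZMod d) : Fin d → ℂ :=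
  ((√h : ℝ) : ℂ)⁻¹ • ∑ k ∈ Finset.range h, ket d (x + k * e)

lemma Zpow_mulVec_progressionState {b : ℤ} {e : ZMod d} (hbe : b * e = 0) (h : ℕ) (x : ZMod d) :
    Zpow d b *ᵥ progressionState d h x e =
      ZMod.stdAddChar (N := d) (b * x) • progressionState d h x e := by
  have hb : ∀ k : ℕ, (b : ZMod d) * (x + k * e) = b * x := fun k => by
    rw [mul_add, mul_left_comm, hbe, mul_zero, add_zero]
  simp only [progressionState, mulVec_smul, mulVec_sum, Zpow_mulVec_ket, hb]
  rw [← Finset.smul_sum, smul_comm]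

lemma star_progressionState_dotProduct_GPM_mulVec (h : ℕ) (x y e : ZMod d) (s t : ℤ) :
    star (progressionState d h x e) ⬝ᵥ (GPM d s t *ᵥ progressionState d h y e) =
      (h : ℂ)⁻¹ * ∑ k ∈ Finset.range h, ∑ k' ∈ Finset.range h,
        if x + k * e = y + k' * e + s then ZMod.stdAddChar (N := d) (t * (y + k' * e)) else 0 := by
  have hsqrt : star ((√h : ℝ) : ℂ)⁻¹ * ((√h : ℝ) : ℂ)⁻¹ = (h : ℂ)⁻¹ := by
    rw [star_inv₀, RCLike.star_def, Complex.conj_ofReal, ← mul_inv, ← Complex.ofReal_mul,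
      Real.mul_self_sqrt h.cast_nonneg, Complex.ofReal_natCast]
  rw [progressionState, progressionState, star_smul, smul_dotProduct, mulVec_smul, dotProduct_smul,
    smul_smul, hsqrt, smul_eq_mul]
  congr 1
  simp only [star_sum, sum_dotProduct, mulVec_sum, dotProduct_sum, GPM_mulVec_ket, dotProduct_smul,
    star_ket_dotProduct_ket, smul_eq_mul, mul_ite, mul_one, mul_zero, Finset.mul_sum]
  exact Finset.sum_comm

lemma star_progressionState_dotProduct_GPM_mulVec_eq_zero_of_ne {h : ℕ} {x y e : ZMod d} {s : ℤ}
    (hne : ∀ k < h, ∀ k' < h, x + k * e ≠ y + k' * e + s) (t : ℤ) :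
    star (progressionState d h x e) ⬝ᵥ (GPM d s t *ᵥ progressionState d h y e) = 0 := by
  rw [star_progressionState_dotProduct_GPM_mulVec]
  refine mul_eq_zero_of_right _ (Finset.sum_eq_zero fun k hk => Finset.sum_eq_zero fun k' hk' => ?_)
  exact if_neg (hne k (Finset.mem_range.1 hk) k' (Finset.mem_range.1 hk'))

lemma star_progressionState_dotProduct_GPM_mulVec_self {h : ℕ} {x e : ZMod d} {s : ℤ}
    (hinj : ∀ k < h, ∀ k' < h, x + k * e = x + k' * e → k = k') (hs : (s : ZMod d) = 0) (t : ℤ) :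
    star (progressionState d h x e) ⬝ᵥ (GPM d s t *ᵥ progressionState d h x e) =
      (h : ℂ)⁻¹ * ∑ k ∈ Finset.range h, ZMod.stdAddChar (N := d) (t * (x + k * e)) := by
  rw [star_progressionState_dotProduct_GPM_mulVec]
  congr 1
  refine Finset.sum_congr rfl fun k hk => ?_
  rw [Finset.sum_eq_single_of_mem k hk, if_pos (by rw [hs, add_zero])]
  intro k' hk' hne
  refine if_neg fun heq => hne ?_
  rw [hs, add_zero] at heq
  exact (hinj k (Finset.mem_range.1 hk) k' (Finset.mem_range.1 hk') heq).symm

lemma star_progressionState_dotProduct_self {h : ℕ} {x e : ZMod d} (hh : h ≠ 0)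
    (hinj : ∀ k < h, ∀ k' < h, x + k * e = x + k' * e → k = k') :
    star (progressionState d h x e) ⬝ᵥ progressionState d h x e = 1 := by
  have hnorm := star_progressionState_dotProduct_GPM_mulVec_self (s := 0) hinj Int.cast_zero 0
  rw [GPM_eq_one (dvd_zero _) (dvd_zero _), one_mulVec] at hnorm
  simp [hnorm, hh]

lemma star_progressionState_dotProduct_GPM_mulVec_self_eq_zero {h : ℕ} {x e : ZMod d} {s t : ℤ}
    (hinj : ∀ k < h, ∀ k' < h, x + k * e = x + k' * e → k = k') (hs : (s : ZMod d) = 0)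
    (hte : t * e ≠ 0) (hhte : h * (t * e) = 0) :
    star (progressionState d h x e) ⬝ᵥ (GPM d s t *ᵥ progressionState d h x e) = 0 := by
  have hterm : ∀ k : ℕ, (ZMod.stdAddChar (N := d) (t * (x + k * e)) : ℂ) =
      ZMod.stdAddChar (N := d) (t * x) * ZMod.stdAddChar (N := d) (t * e) ^ k := fun k => by
    rw [← AddChar.map_nsmul_eq_pow, ← AddChar.map_add_eq_mul, nsmul_eq_mul]
    ring_nf
  have hne : (ZMod.stdAddChar (N := d) (t * e) : ℂ) ≠ 1 := fun heq =>
    hte (ZMod.injective_stdAddChar (heq.trans (AddChar.map_zero_eq_one _).symm))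
  have hpow : (ZMod.stdAddChar (N := d) (t * e) : ℂ) ^ h = 1 := by
    rw [← AddChar.map_nsmul_eq_pow, nsmul_eq_mul, hhte, AddChar.map_zero_eq_one]
  rw [star_progressionState_dotProduct_GPM_mulVec_self hinj hs]
  simp_rw [hterm]
  rw [← Finset.mul_sum, geom_sum_eq hne, hpow, sub_self, zero_div, mul_zero, mul_zero]

end ProgressionState

section SeparatedProgressions

/-- The `a` progressions `x s + k e`, `k < h`, with `s < a`, consist of labels that are pairwise
distinct modulo `a h`. -/
def SeparatedProgressions (a h : ℕ) (x : ℕ → ℤ) (e : ℤ) : Prop :=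
  ∀ s < a, ∀ s' < a, ∀ k < h, ∀ k' < h,
    x s + k * e ≡ x s' + k' * e [ZMOD (a * h : ℕ)] → s = s' ∧ k = k'

lemma SeparatedProgressions.eq_and_eq_of_intCast_eq {a h d : ℕ} {x : ℕ → ℤ} {e m : ℤ}
    (hsep : SeparatedProgressions a h x e) (hd : a * h ∣ d) (hm : ((a * h : ℕ) : ℤ) ∣ m)
    {s s' k k' : ℕ} (hs : s < a) (hs' : s' < a) (hk : k < h) (hk' : k' < h)
    (heq : (x s : ZMod d) + k * e = x s' + k' * e + m) : s = s' ∧ k = k' := by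
  have hmod : x s + k * e ≡ x s' + k' * e + m [ZMOD d] := by
    rw [← ZMod.intCast_eq_intCast_iff]
    push_cast
    exact heq
  refine hsep s hs s' hs' k hk k' hk' ((hmod.of_dvd (Int.natCast_dvd_natCast.2 hd)).trans ?_)
  simpa only [add_zero] using (Int.modEq_zero_iff_dvd.2 hm).add_left (x s' + k' * e)

/-- The number whose mixed-radix expansion is obtained from `s = r + g q`, `r < g`, by inserting a
digit `k` in base `h`: it is `r + g (k + h q)`. -/
def insertDigit (g h s k : ℕ) : ℕ := s % g + g * (k + h * (s / g))

lemma insertDigit_lt {a g h s k : ℕ} (hg : 0 < g) (hga : g ∣ a) (hs : s < a) (hk : k < h) :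
    insertDigit g h s k < a * h := by
  obtain ⟨m, rfl⟩ := hga
  have hr : s % g < g := Nat.mod_lt s hg
  have hq : s / g + 1 ≤ m := Nat.div_lt_of_lt_mul hs
  calc s % g + g * (k + h * (s / g)) < g + g * (k + h * (s / g)) := by gcongr
    _ = g * (k + 1 + h * (s / g)) := by ring
    _ ≤ g * (h + h * (s / g)) := by gcongr; exact hk
    _ = g * h * (s / g + 1) := by ring
    _ ≤ g * h * m := by gcongr
    _ = g * m * h := by ring

lemma insertDigit_inj {g h s s' k k' : ℕ} (hg : 0 < g) (hk : k < h) (hk' : k' < h)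
    (heq : insertDigit g h s k = insertDigit g h s' k') : s = s' ∧ k = k' := by
  have hr : s % g = s' % g := by simpa [insertDigit] using congrArg (· % g) heq
  have hkq : k + h * (s / g) = k' + h * (s' / g) := by
    unfold insertDigit at heq
    exact Nat.eq_of_mul_eq_mul_left hg (by omega)
  have hkk : k = k' := by
    simpa [Nat.mod_eq_of_lt hk, Nat.mod_eq_of_lt hk'] using congrArg (· % h) hkq
  have hq : s / g = s' / g := Nat.eq_of_mul_eq_mul_left (Nat.zero_lt_of_lt hk) (by omega)
  exact ⟨Nat.ext_div_mod hq hr, hkk⟩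

lemma exists_separated_progressions {a h E : ℕ} (ha : 0 < a) (hh : 0 < h) (hEh : E.Coprime h) :
    ∃ (x : ℕ → ℤ) (e : ℤ), IsCoprime e h ∧ (E : ℤ) ∣ e ∧ (∀ s, (E : ℤ) ∣ x s - s) ∧
      SeparatedProgressions a h x e := by
  set g := E.gcd (a * h)
  have hg : 0 < g := Nat.gcd_pos_of_pos_right E (Nat.mul_pos ha hh)
  have hgh : g.Coprime h := hEh.coprime_dvd_left (Nat.gcd_dvd_left ..)
  have hga : g ∣ a := hgh.dvd_of_dvd_mul_right (Nat.gcd_dvd_right ..)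
  obtain ⟨e, hEe, heg⟩ : ∃ e : ℤ, (E : ℤ) ∣ e ∧ e ≡ g [ZMOD (a * h : ℕ)] :=
    ⟨E * E.gcdA (a * h), dvd_mul_right .., Int.modEq_iff_dvd.2
      ⟨E.gcdB (a * h), sub_eq_of_eq_add' (Nat.gcd_eq_gcd_ab E (a * h))⟩⟩
  -- Modulo `a h` one has `e ≡ g`, and `x s` is chosen so that `x s + k e` is `insertDigit g h s k`.
  refine ⟨fun s => s + (h - 1) * (s / g : ℕ) * e, e, ?_, hEe,
    fun s => (add_sub_cancel_left (s : ℤ) _).symm ▸ hEe.mul_left _,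
    fun s hs s' hs' k hk k' hk' hmod => ?_⟩
  · obtain ⟨c, hc⟩ := heg.dvd
    obtain rfl : e = g + h * -(a * c) := by push_cast at hc; linear_combination -hc
    exact (Nat.isCoprime_iff_coprime.2 hgh).add_mul_left_left _
  · have hdigit : ∀ s k : ℕ, s + (h - 1) * (s / g : ℕ) * e + k * e ≡ insertDigit g h s k
        [ZMOD (a * h : ℕ)] := fun s k => by
      calc s + (h - 1) * (s / g : ℕ) * e + k * e = s + (k + (h - 1) * (s / g : ℕ)) * e := by ring
        _ ≡ s + (k + (h - 1) * (s / g : ℕ)) * g [ZMOD (a * h : ℕ)] := (heg.mul_left _).add_left _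
        _ = insertDigit g h s k := by
          have hs : (s : ℤ) = (s % g : ℕ) + g * (s / g : ℕ) := by
            exact_mod_cast (Nat.mod_add_div s g).symm
          rw [insertDigit]
          push_cast at hs ⊢
          linear_combination hs
    have hinsert : insertDigit g h s k ≡ insertDigit g h s' k' [MOD a * h] :=
      Int.natCast_modEq_iff.1 ((hdigit s k).symm.trans (hmod.trans (hdigit s' k')))
    exact insertDigit_inj hg hk hk' (hinsert.eq_of_lt_of_lt (insertDigit_lt hg hga hs hk)
      (insertDigit_lt hg hga hs' hk'))

end SeparatedProgressions

section Intertwiner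

variable {d a D h : ℕ} [NeZero d] {Q : Matrix (Fin d) (Fin d) ℂ} {u v e : ℤ} {x : ℕ → ℤ}

lemma intCast_mul_eq_zero_iff_dvd (hd : d = a * D) (m : ℤ) :
    ((m * a : ℤ) : ZMod d) = 0 ↔ (D : ℤ) ∣ m := by
  have ha : (a : ℤ) ≠ 0 := Nat.cast_ne_zero.2 (left_ne_zero_of_mul (hd ▸ NeZero.ne d))
  rw [ZMod.intCast_zmod_eq_zero_iff_dvd, hd, Nat.cast_mul, mul_comm m, mul_dvd_mul_iff_left ha]

lemma exists_phaseEq_GPM_pow_eq_one (hd : d = a * D) (u v : ℤ) :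
    ∃ Q, PhaseEq Q (GPM d (u * a) (v * a)) ∧ Q ^ D = 1 := by
  have hdvd : ∀ m : ℤ, (d : ℤ) ∣ D * (m * a) := fun m => by
    rw [← ZMod.intCast_zmod_eq_zero_iff_dvd, ← mul_assoc, intCast_mul_eq_zero_iff_dvd hd]
    exact dvd_mul_right ..
  have hD : 0 < D := Nat.pos_of_ne_zero (right_ne_zero_of_mul (hd ▸ NeZero.ne d))
  have hpow := GPM_pow_phaseEq (d := d) (u * a) (v * a) D
  rw [GPM_eq_one (hdvd u) (hdvd v)] at hpow
  exact PhaseEq.exists_pow_eq_one hD hpow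

lemma Zpow_mul_of_phaseEq_GPM {s t : ℤ} (hQ : PhaseEq Q (GPM d s t)) (b : ℤ) :
    Zpow d b * Q = ZMod.stdAddChar (N := d) (b * s) • (Q * Zpow d b) := by
  obtain ⟨c, -, rfl⟩ := hQ
  rw [mul_smul_comm, Zpow_mul_GPM, smul_mul_assoc, smul_comm]

lemma star_progressionState_dotProduct_GPM_mulVec_eq_zero (hd : d = a * D) (hh : h = u.gcd D)
    (hve : IsCoprime (v * e) h) (hsep : SeparatedProgressions a h x e)
    {s s' n : ℕ} (hs : s < a) (hs' : s' < a) (hn : s = s' → ¬ D ∣ n) :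
    star (progressionState d h (x s) e) ⬝ᵥ
      (GPM d (n * (u * a)) (n * (v * a)) *ᵥ progressionState d h (x s') e) = 0 := by
  have hahd : a * h ∣ d := hd ▸ mul_dvd_mul_left a (hh ▸ Nat.gcd_dvd_right ..)
  have hahu : ((a * h : ℕ) : ℤ) ∣ n * (u * a) := by
    rw [hh, Nat.cast_mul, mul_comm u]
    exact (mul_dvd_mul_left _ (Int.gcd_dvd_left ..)).mul_left _
  by_cases hzero : s = s' ∧ ((n * (u * a) : ℤ) : ZMod d) = 0
  · obtain ⟨rfl, hnua⟩ := hzero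
    have hDnh : (D : ℤ) ∣ n * h := by
      rw [← mul_assoc, intCast_mul_eq_zero_iff_dvd hd] at hnua
      rw [hh, mul_comm, Int.gcd_comm]
      exact Int.dvd_gcd_mul_iff_dvd_mul.2 (mul_comm u _ ▸ hnua)
    refine star_progressionState_dotProduct_GPM_mulVec_self_eq_zero (fun k hk k' hk' heq =>
      (hsep.eq_and_eq_of_intCast_eq hahd hahu hs hs hk hk' (by rw [hnua, add_zero, heq])).2)
      hnua (fun hnve => hn rfl ?_) ?_
    · have hDnve : (D : ℤ) ∣ n * (v * e) := by
        rw [← intCast_mul_eq_zero_iff_dvd hd, ← hnve]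
        push_cast
        ring
      obtain ⟨α, β, hαβ⟩ := hve
      have hnαβ : α * (n * (v * e)) + β * (n * h) = n := by linear_combination n * hαβ
      exact Int.natCast_dvd_natCast.1 (hnαβ ▸ hDnve.linear_comb hDnh α β)
    · have hhnve := (intCast_mul_eq_zero_iff_dvd hd _).2 (hDnh.mul_right (v * e))
      push_cast at hhnve ⊢
      linear_combination hhnve
  · refine star_progressionState_dotProduct_GPM_mulVec_eq_zero_of_ne
      (fun k hk k' hk' heq => hzero ?_) _
    obtain ⟨rfl, rfl⟩ := hsep.eq_and_eq_of_intCast_eq hahd hahu hs hs' hk hk' heq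
    exact ⟨rfl, left_eq_add.1 heq⟩

lemma star_progressionState_dotProduct_pow_mulVec (hd : d = a * D) (hh : h = u.gcd D)
    (hve : IsCoprime (v * e) h) (hsep : SeparatedProgressions a h x e)
    (hQ : PhaseEq Q (GPM d (u * a) (v * a))) (hQD : Q ^ D = 1)
    (n : ℕ) {s s' : ℕ} (hs : s < a) (hs' : s' < a) :
    star (progressionState d h (x s) e) ⬝ᵥ (Q ^ n *ᵥ progressionState d h (x s') e) =
      if s = s' ∧ D ∣ n then 1 else 0 := by
  split_ifs with hn
  · obtain ⟨rfl, m, rfl⟩ := hn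
    have hahd : a * h ∣ d := hd ▸ mul_dvd_mul_left a (hh ▸ Nat.gcd_dvd_right ..)
    have hh0 : h ≠ 0 := right_ne_zero_of_mul (ne_zero_of_dvd_ne_zero (NeZero.ne d) hahd)
    rw [pow_mul, hQD, one_pow, one_mulVec]
    refine star_progressionState_dotProduct_self hh0 fun k hk k' hk' heq => ?_
    exact (hsep.eq_and_eq_of_intCast_eq hahd (dvd_zero _) hs hs hk hk' (by
      rw [Int.cast_zero, add_zero, heq])).2
  · obtain ⟨c, -, hc⟩ := (hQ.pow n).trans (GPM_pow_phaseEq (u * a) (v * a) n)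
    rw [hc, smul_mulVec, dotProduct_smul, star_progressionState_dotProduct_GPM_mulVec_eq_zero hd hh
      hve hsep hs hs' fun hss hDn => hn ⟨hss, hDn⟩, smul_zero]

lemma exists_unitary_intertwining {b E : ℕ} (hdD : d = a * D) (hdE : d = b * E)
    (hu : (u * a * b : ZMod d) = a * b) (hh : h = u.gcd D) (hv : IsCoprime v h)
    (hEh : E.Coprime h) :
    ∃ W ∈ unitaryGroup (Fin d) ℂ, ∃ Q, PhaseEq Q (GPM d (u * a) (v * a)) ∧
      W * Xpow d a = Q * W ∧ W * Zpow d b = Zpow d b * W := by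
  have had : a * D ≠ 0 := hdD ▸ NeZero.ne d
  have hh0 : 0 < h := hh ▸ Int.gcd_pos_of_ne_zero_right _
    (Nat.cast_ne_zero.2 (right_ne_zero_of_mul had))
  obtain ⟨x, e, heh, hEe, hxs, hsep⟩ :=
    exists_separated_progressions (Nat.pos_of_ne_zero (left_ne_zero_of_mul had)) hh0 hEh
  obtain ⟨Q, hQ, hQD⟩ := exists_phaseEq_GPM_pow_eq_one hdD u v
  have hb : ∀ m : ℤ, (E : ℤ) ∣ m → (b : ZMod d) * m = 0 := fun m hm => by
    have := (intCast_mul_eq_zero_iff_dvd hdE m).2 hm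
    rwa [mul_comm, Int.cast_mul, Int.cast_natCast] at this
  let w s := progressionState d h (x s) e
  have hZw : ∀ s : ℕ, Zpow d b *ᵥ w s = ZMod.stdAddChar (N := d) ((b : ℤ) * s) • w s := fun s => by
    have hbxs := hb _ (hxs s)
    push_cast at hbxs
    have hbx : (b : ZMod d) * x s = b * s := by linear_combination hbxs
    rw [Zpow_mulVec_progressionState (by simpa only [Int.cast_natCast] using hb e hEe)]
    simp only [Int.cast_natCast, hbx, w]
  have hZQ : Zpow d b * Q = ZMod.stdAddChar (N := d) ((b : ℤ) * a) • (Q * Zpow d b) := by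
    have hbu : (b : ZMod d) * (u * a) = b * a := by linear_combination hu
    simp only [Zpow_mul_of_phaseEq_GPM hQ, Int.cast_mul, Int.cast_natCast, hbu]
  have hW : orbitMatrix a Q w ∈ unitaryGroup (Fin d) ℂ :=
    orbitMatrix_mem_unitaryGroup hdD hQD (hQ.mem_unitaryGroup (GPM_mem_unitaryGroup _ _))
      fun n _ _ hs hs' => star_progressionState_dotProduct_pow_mulVec hdD hh (hv.mul_left heh) hsep
        hQ hQD n hs hs'
  exact ⟨_, hW, Q, hQ, orbitMatrix_mul_Xpow hdD hQD, orbitMatrix_mul_Zpow hdD hQD hZQ hZw⟩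

end Intertwiner

theorem exists_unitary_conj_of_divides_general (d : ℕ) [NeZero d] (a b : ℕ) (ha : a ∣ d)
    (hb : b ∣ d) (u v : ℤ)
    (h1 : Int.gcd u (Int.gcd v ((d / a : ℕ) : ℤ) : ℤ) = 1)
    (h2 : u * a * b ≡ (a : ℤ) * b [ZMOD (d : ℤ)])
    (h3 : Int.gcd u (Int.gcd ((d / a : ℕ) : ℤ) ((d / b : ℕ) : ℤ) : ℤ) = 1) :
    ∃ W ∈ Matrix.unitaryGroup (Fin d) ℂ,
      PhaseEq (W * Xpow d (a : ℤ) * Wᴴ) (GPM d (u * a) (v * a)) ∧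
      W * Zpow d (b : ℤ) * Wᴴ = Zpow d (b : ℤ) := by
  have hv : IsCoprime v (u.gcd (d / a : ℕ) : ℤ) := by
    rwa [Int.gcd_left_comm, ← Int.isCoprime_iff_gcd_eq_one] at h1
  have hE : (d / b).Coprime (u.gcd (d / a : ℕ)) := by
    rwa [← Int.gcd_assoc, Int.gcd_natCast_natCast, Nat.gcd_comm] at h3
  have hu : (u * a * b : ZMod d) = a * b := by
    exact_mod_cast (ZMod.intCast_eq_intCast_iff _ _ d).2 h2
  obtain ⟨W, hW, Q, hQ, hX, hZ⟩ := exists_unitary_intertwining (Nat.mul_div_cancel' ha).symm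
    (Nat.mul_div_cancel' hb).symm hu rfl hv hE
  exact ⟨W, hW, mul_mul_conjTranspose_of_mul_eq hW hX ▸ hQ, mul_mul_conjTranspose_of_mul_eq hW hZ⟩

/-- **Lemma B.2.** If `a, b` are positive divisors of `d` with `a ∣ b`, and
`u, v` are integers with `gcd(u, v, d/a) = 1`, `u·a·b ≡ a·b (mod d)` and
`gcd(u, d/a, d/b) = 1`, then some unitary `W` satisfies `W X^a W† ≈ X^{ua} Z^{va}` and
`W Z^b W† ≈ Z^b`. -/
theorem exists_unitary_conj_of_divides (d : ℕ) (hd : 2 ≤ d) (a b : ℕ)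
    (ha0 : 0 < a) (hb0 : 0 < b) (ha : a ∣ d) (hb : b ∣ d) (hab : a ∣ b)
    (u v : ℤ)
    (h1 : Int.gcd u (Int.gcd v ((d / a : ℕ) : ℤ) : ℤ) = 1)
    (h2 : u * a * b ≡ (a : ℤ) * b [ZMOD (d : ℤ)])
    (h3 : Int.gcd u (Int.gcd ((d / a : ℕ) : ℤ) ((d / b : ℕ) : ℤ) : ℤ) = 1) :
    ∃ W ∈ Matrix.unitaryGroup (Fin d) ℂ,
      PhaseEq (W * Xpow d (a : ℤ) * Wᴴ) (GPM d (u * a) (v * a)) ∧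
      PhaseEq (W * Zpow d (b : ℤ) * Wᴴ) (Zpow d (b : ℤ)) := by
  have : NeZero d := ⟨by lia⟩
  obtain ⟨W, hW, hX, hZ⟩ := exists_unitary_conj_of_divides_general d a b ha hb u v h1 h2 h3
  exact ⟨W, hW, hX, by simpa only [hZ] using PhaseEq.refl _⟩
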